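/- Let m ≥ 3 with m - 4 ≤ 6, i.e., m ∈ {3,4,5,6,7,8,9,10}. Then the m-gonal form ⟨1,1,1,1,2⟩_m given by P_m(x₁)+P_m(x₂)+P_m(x₃)+P_m(x₄)+2P_m(x₅) is universal: it represents every positive integer. -/

import Mathlib

/-- The generalized `m`-gonal number `P_m(x) = ((m-2)x² - (m-4)x)/2`. -/
def polygonal (m x : ℤ) : ℤ := ((m - 2) * x ^ 2 - (m - 4) * x) / 2

/-!
Since `2 P_m(x) = (m - 2)(x² - x) + 2x`, a sum of four `m`-gonal numbers equals `(m - 2)j + b`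
as soon as the `xᵢ` have sum `b` and sum of squares `2j + b`. By an observation of Cauchy such
`xᵢ` exist when `4(2j + b) - b²` is a sum of three squares. Write `N = (m - 2)j + r` with
`0 ≤ r < m - 2 ≤ 8`. If `j ≥ 1`, one can take `x₅ = 0`, `b = r` or `x₅ = 1`, `b = r - 2` so that
Legendre's three-square theorem applies; if `j = 0`, then `N ≤ 7` and the `xᵢ` are explicit.

The three-square theorem comes from the reduction of ternary quadratic forms: the only reduced
positive definite form of determinant `1` is `x² + y² + z²`. Given `n`, Dirichlet's theorem on
primes in progressions and quadratic reciprocity produce such a form representing `n`.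
-/

/-! ### Reduction of ternary quadratic forms -/

theorem exists_two_mul_abs_add_mul_le (t : ℤ) {a : ℤ} (ha : 0 < a) :
    ∃ q : ℤ, 2 * |t + q * a| ≤ a := by
  refine ⟨-((2 * t + a) / (2 * a)), ?_⟩
  have hdiv := Int.mul_ediv_add_emod (2 * t + a) (2 * a)
  have hnonneg := Int.emod_nonneg (2 * t + a) (show 2 * a ≠ 0 by omega)
  have hlt := Int.emod_lt_of_pos (2 * t + a) (show 0 < 2 * a by omega)
  have habs : |2 * (t + -((2 * t + a) / (2 * a)) * a)| ≤ a :=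
    abs_le.mpr ⟨by linarith, by linarith⟩
  rwa [abs_mul, abs_two] at habs

/-- The integral ternary quadratic form `ax² + by² + cz² + 2ryz + 2sxz + 2txy`, given by the
entries of its Gram matrix `[[a, t, s], [t, b, r], [s, r, c]]`. -/
structure TernaryForm where
  (a b c r s t : ℤ)

namespace TernaryForm

variable {f : TernaryForm}

/-- The value of the form at an integer vector. -/
def eval (f : TernaryForm) (x y z : ℤ) : ℤ :=
  f.a * x ^ 2 + f.b * y ^ 2 + f.c * z ^ 2 + 2 * f.r * y * z + 2 * f.s * x * z + 2 * f.t * x * y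

/-- The set of integers represented by the form. -/
def values (f : TernaryForm) : Set ℤ := {n | ∃ x y z, f.eval x y z = n}

/-- The leading `2 × 2` minor of the Gram matrix. -/
def minor (f : TernaryForm) : ℤ := f.a * f.b - f.t ^ 2

/-- The minor of the Gram matrix on the rows `1, 2` and the columns `1, 3`. -/
def mixedMinor (f : TernaryForm) : ℤ := f.a * f.r - f.s * f.t

/-- The determinant of the Gram matrix. -/
def det (f : TernaryForm) : ℤ :=
  f.a * f.b * f.c + 2 * f.r * f.s * f.t - f.a * f.r ^ 2 - f.b * f.s ^ 2 - f.c * f.t ^ 2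

/-- Positive definiteness, encoded by Sylvester's criterion. -/
structure IsPosDef (f : TernaryForm) : Prop where
  a_pos : 0 < f.a
  minor_pos : 0 < f.minor
  det_pos : 0 < f.det

/-- The form `f(y, x, z)`. -/
def swapXY (f : TernaryForm) : TernaryForm := ⟨f.b, f.a, f.c, f.s, f.r, f.t⟩

/-- The form `f(x, z, y)`. -/
def swapYZ (f : TernaryForm) : TernaryForm := ⟨f.a, f.c, f.b, f.r, f.t, f.s⟩

/-- The form `f(x + qy + pz, y + kz, z)`. -/
def shear (f : TernaryForm) (q p k : ℤ) : TernaryForm where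
  a := f.a
  b := f.b + 2 * q * f.t + q ^ 2 * f.a
  c := f.c + 2 * k * f.r + k ^ 2 * f.b + 2 * p * (f.s + k * f.t) + p ^ 2 * f.a
  r := f.r + k * f.b + q * (f.s + k * f.t) + p * f.t + p * q * f.a
  s := f.s + k * f.t + p * f.a
  t := f.t + q * f.a

/-- The off-diagonal part of the reduction conditions, which a `shear` can achieve without
changing `a` and `minor`. -/
structure IsSizeReduced (f : TernaryForm) : Prop where
  two_mul_abs_t_le : 2 * |f.t| ≤ f.a
  two_mul_abs_s_le : 2 * |f.s| ≤ f.a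
  two_mul_abs_mixedMinor_le : 2 * |f.mixedMinor| ≤ f.minor

/-- Reduced forms: size-reduced ones for which neither swap of adjacent variables decreases
`(a, minor)` lexicographically. -/
structure IsReduced (f : TernaryForm) : Prop extends IsSizeReduced f where
  a_le : f.a ≤ f.swapXY.a
  minor_le : f.minor ≤ f.swapYZ.minor

theorem minor_swapXY (f : TernaryForm) : f.swapXY.minor = f.minor := by
  simp only [minor, swapXY]; ring

theorem det_swapXY (f : TernaryForm) : f.swapXY.det = f.det := by
  simp only [det, swapXY]; ring

theorem det_swapYZ (f : TernaryForm) : f.swapYZ.det = f.det := by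
  simp only [det, swapYZ]; ring

theorem minor_shear (f : TernaryForm) (q p k : ℤ) : (f.shear q p k).minor = f.minor := by
  simp only [minor, shear]; ring

theorem mixedMinor_shear (f : TernaryForm) (q p k : ℤ) :
    (f.shear q p k).mixedMinor = f.mixedMinor + k * f.minor := by
  simp only [mixedMinor, minor, shear]; ring

theorem det_shear (f : TernaryForm) (q p k : ℤ) : (f.shear q p k).det = f.det := by
  simp only [det, shear]; ring

theorem values_subset_values_swapXY (f : TernaryForm) : f.values ⊆ f.swapXY.values := by
  rintro _ ⟨x, y, z, rfl⟩
  exact ⟨y, x, z, by simp only [eval, swapXY]; ring⟩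

theorem values_subset_values_swapYZ (f : TernaryForm) : f.values ⊆ f.swapYZ.values := by
  rintro _ ⟨x, y, z, rfl⟩
  exact ⟨x, z, y, by simp only [eval, swapYZ]; ring⟩

theorem values_subset_values_shear (f : TernaryForm) (q p k : ℤ) :
    f.values ⊆ (f.shear q p k).values := by
  rintro _ ⟨x, y, z, rfl⟩
  exact ⟨x - q * (y - k * z) - p * z, y - k * z, z, by simp only [eval, shear]; ring⟩

theorem minor_mul_minor_swapYZ (f : TernaryForm) :
    f.minor * f.swapYZ.minor = f.mixedMinor ^ 2 + f.a * f.det := by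
  simp only [minor, mixedMinor, det, swapYZ]; ring

theorem IsPosDef.swapXY (hf : f.IsPosDef) : f.swapXY.IsPosDef where
  a_pos := by
    have hab : 0 < f.a * f.b := by
      have := hf.minor_pos
      unfold minor at this
      linarith [sq_nonneg f.t]
    exact pos_of_mul_pos_right hab hf.a_pos.le
  minor_pos := f.minor_swapXY ▸ hf.minor_pos
  det_pos := f.det_swapXY ▸ hf.det_pos

theorem IsPosDef.swapYZ (hf : f.IsPosDef) : f.swapYZ.IsPosDef where
  a_pos := hf.a_pos
  minor_pos := by
    have hprod : 0 < f.minor * f.swapYZ.minor := by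
      rw [minor_mul_minor_swapYZ]
      exact add_pos_of_nonneg_of_pos (sq_nonneg _) (mul_pos hf.a_pos hf.det_pos)
    exact pos_of_mul_pos_right hprod hf.minor_pos.le
  det_pos := f.det_swapYZ ▸ hf.det_pos

theorem IsPosDef.shear (hf : f.IsPosDef) (q p k : ℤ) : (f.shear q p k).IsPosDef where
  a_pos := hf.a_pos
  minor_pos := f.minor_shear q p k ▸ hf.minor_pos
  det_pos := f.det_shear q p k ▸ hf.det_pos

theorem IsPosDef.exists_isSizeReduced (hf : f.IsPosDef) :
    ∃ g : TernaryForm, g.IsPosDef ∧ g.IsSizeReduced ∧ g.a = f.a ∧ g.minor = f.minor ∧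
      g.det = f.det ∧ f.values ⊆ g.values := by
  obtain ⟨k, hk⟩ := exists_two_mul_abs_add_mul_le f.mixedMinor hf.minor_pos
  obtain ⟨q, hq⟩ := exists_two_mul_abs_add_mul_le f.t hf.a_pos
  obtain ⟨p, hp⟩ := exists_two_mul_abs_add_mul_le (f.s + k * f.t) hf.a_pos
  exact ⟨f.shear q p k, hf.shear q p k, ⟨hq, hp, by rwa [mixedMinor_shear, minor_shear]⟩, rfl,
    f.minor_shear q p k, f.det_shear q p k, f.values_subset_values_shear q p k⟩

theorem exists_isReduced (f : TernaryForm) (hf : f.IsPosDef) :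
    ∃ g : TernaryForm, g.IsPosDef ∧ g.IsReduced ∧ g.det = f.det ∧ f.values ⊆ g.values := by
  obtain ⟨h, hpos, hsize, ha, hminor, hdet, hvalues⟩ := hf.exists_isSizeReduced
  by_cases hxy : h.swapXY.a < f.a
  · obtain ⟨g, hg, hred, hgdet, hgvalues⟩ := exists_isReduced h.swapXY hpos.swapXY
    exact ⟨g, hg, hred, by rw [hgdet, det_swapXY, hdet],
      (hvalues.trans h.values_subset_values_swapXY).trans hgvalues⟩
  by_cases hyz : h.swapYZ.minor < f.minor
  · obtain ⟨g, hg, hred, hgdet, hgvalues⟩ := exists_isReduced h.swapYZ hpos.swapYZ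
    exact ⟨g, hg, hred, by rw [hgdet, det_swapYZ, hdet],
      (hvalues.trans h.values_subset_values_swapYZ).trans hgvalues⟩
  exact ⟨h, hpos, ⟨hsize, ha.trans_le (not_lt.mp hxy), hminor.trans_le (not_lt.mp hyz)⟩, hdet,
    hvalues⟩
termination_by (f.a.toNat, f.minor.toNat)
decreasing_by
  · exact Prod.Lex.left _ _ ((Int.toNat_lt_toNat hf.a_pos).mpr hxy)
  · rw [show h.swapYZ.a = f.a from ha]
    exact Prod.Lex.right _ ((Int.toNat_lt_toNat hf.minor_pos).mpr hyz)

theorem IsReduced.three_mul_a_sq_le (hf : f.IsReduced) : 3 * f.a ^ 2 ≤ 4 * f.minor := by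
  have ha : 0 ≤ f.a := by linarith [hf.two_mul_abs_t_le, abs_nonneg f.t]
  have ht : (2 * |f.t|) ^ 2 ≤ f.a ^ 2 := by
    gcongr
    exact hf.two_mul_abs_t_le
  have hab : f.a * f.a ≤ f.a * f.b := mul_le_mul_of_nonneg_left hf.a_le ha
  rw [mul_pow, sq_abs] at ht
  unfold minor
  linarith

theorem IsReduced.three_mul_minor_sq_le (hf : f.IsReduced) :
    3 * f.minor ^ 2 ≤ 4 * (f.a * f.det) := by
  have hminor : 0 ≤ f.minor := by
    linarith [hf.two_mul_abs_mixedMinor_le, abs_nonneg f.mixedMinor]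
  have hmixed : (2 * |f.mixedMinor|) ^ 2 ≤ f.minor ^ 2 := by
    gcongr
    exact hf.two_mul_abs_mixedMinor_le
  have hmul : f.minor * f.minor ≤ f.minor * f.swapYZ.minor :=
    mul_le_mul_of_nonneg_left hf.minor_le hminor
  rw [mul_pow, sq_abs] at hmixed
  rw [minor_mul_minor_swapYZ] at hmul
  linarith

theorem IsReduced.eq_of_det_eq_one (hf : f.IsReduced) (hpos : f.IsPosDef) (hdet : f.det = 1) :
    f = ⟨1, 1, 1, 0, 0, 0⟩ := by
  have haa := hf.three_mul_a_sq_le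
  have hmm := hf.three_mul_minor_sq_le
  have ha_pos := hpos.a_pos
  have hm_pos := hpos.minor_pos
  rw [hdet, mul_one] at hmm
  have hle : f.a ≤ 1 ∧ f.minor ≤ 1 := by
    constructor <;> nlinarith
  have ha : f.a = 1 := by omega
  have hminor : f.minor = 1 := by omega
  have ht := hf.two_mul_abs_t_le
  have hs := hf.two_mul_abs_s_le
  have hr := hf.two_mul_abs_mixedMinor_le
  obtain ⟨a, b, c, r, s, t⟩ := f
  simp only [minor, mixedMinor, det] at *
  obtain rfl : t = 0 := abs_eq_zero.mp (by have := abs_nonneg t; omega)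
  obtain rfl : s = 0 := abs_eq_zero.mp (by have := abs_nonneg s; omega)
  subst ha
  obtain rfl : b = 1 := by linarith
  rw [one_mul, zero_mul, sub_zero] at hr
  obtain rfl : r = 0 := abs_eq_zero.mp (by have := abs_nonneg r; omega)
  obtain rfl : c = 1 := by linarith
  rfl

end TernaryForm

/-! ### The three-square theorem -/

/-- `n` is a sum of three integer squares. -/
def IsSumThreeSq (n : ℤ) : Prop := ∃ x y z : ℤ, x ^ 2 + y ^ 2 + z ^ 2 = n

theorem IsSumThreeSq.sq_mul {n : ℤ} (h : IsSumThreeSq n) (k : ℤ) : IsSumThreeSq (k ^ 2 * n) := by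
  obtain ⟨x, y, z, rfl⟩ := h
  exact ⟨k * x, k * y, k * z, by ring⟩

theorem TernaryForm.IsPosDef.isSumThreeSq {f : TernaryForm} (hf : f.IsPosDef) (hdet : f.det = 1)
    {n : ℤ} (hn : n ∈ f.values) : IsSumThreeSq n := by
  obtain ⟨g, hg, hred, hgdet, hvalues⟩ := f.exists_isReduced hf
  obtain rfl := hred.eq_of_det_eq_one hg (hgdet.trans hdet)
  obtain ⟨x, y, z, hxyz⟩ := hvalues hn
  exact ⟨x, y, z, by rw [← hxyz, eval]; ring⟩

theorem isSumThreeSq_of_dvd_sq_add {n d e : ℤ} (hd : 0 < d) (hdn : 0 < d * n - 1)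
    (h : d * n - 1 ∣ e ^ 2 + d) : IsSumThreeSq n := by
  obtain ⟨a, ha⟩ := h
  have ha_pos : 0 < a := pos_of_mul_pos_right (by rw [← ha]; positivity) hdn.le
  let f : TernaryForm := ⟨a, d * n - 1, n, 0, 1, e⟩
  have hminor : f.minor = d := by simp only [f, TernaryForm.minor]; linear_combination -ha
  have hdet : f.det = 1 := by simp only [f, TernaryForm.det]; linear_combination -n * ha
  have hf : f.IsPosDef := ⟨ha_pos, by rwa [hminor], by rw [hdet]; exact one_pos⟩
  exact hf.isSumThreeSq hdet ⟨0, 0, 1, by simp [f, TernaryForm.eval]⟩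

section Reciprocity

open NumberTheorySymbols ZMod

variable {d n p q c ε : ℕ}

theorem jacobiSym_neg_eq_jacobiSym_swap (hd : Odd d) (hp : Odd p)
    (h : p % 4 = 1 ∨ d % 4 = 3) : J(-d | p) = J(p | d) := by
  rw [jacobiSym.neg _ hp]
  rcases Nat.odd_mod_four_iff.mp (Nat.odd_iff.mp hp) with hp1 | hp3
  · rw [χ₄_nat_one_mod_four hp1, one_mul, jacobiSym.quadratic_reciprocity_one_mod_four' hd hp1]
  · have hd3 : d % 4 = 3 := by omega
    rw [χ₄_nat_three_mod_four hp3, jacobiSym.quadratic_reciprocity_three_mod_four hd3 hp3]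
    ring

theorem jacobiSym_eq_one_of_mul_add_one_eq_mul (h : ε * p + 1 = d * n) (hJ : J(-ε | d) = 1) :
    J(p | d) = 1 := by
  have hmod : (-ε * p : ℤ) ≡ 1 [ZMOD d] :=
    Int.modEq_iff_dvd.mpr ⟨n, by zify at h; linear_combination h⟩
  calc J(p | d) = J(-ε | d) * J(p | d) := by rw [hJ, one_mul]
    _ = J(1 | d) := by rw [← jacobiSym.mul_left, jacobiSym.mod_left' hmod]
    _ = 1 := jacobiSym.one_left d

theorem exists_dvd_sq_add_of_jacobiSym_eq_one (hp : p.Prime) (h : J(-d | p) = 1) :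
    ∃ e : ℤ, (p : ℤ) ∣ e ^ 2 + d := by
  have := Fact.mk hp
  obtain ⟨e, he⟩ := ZMod.isSquare_of_jacobiSym_eq_one h
  refine ⟨e.val, (ZMod.intCast_zmod_eq_zero_iff_dvd _ p).mp ?_⟩
  push_cast at he ⊢
  rw [ZMod.natCast_zmod_val]
  linear_combination -he

theorem exists_two_mul_dvd_sq_add {e d p : ℤ} (hp : Odd p) (h : p ∣ e ^ 2 + d) :
    ∃ e' : ℤ, 2 * p ∣ e' ^ 2 + d := by
  have hcoprime : IsCoprime 2 p := by
    obtain ⟨k, rfl⟩ := hp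
    exact ⟨-k, 1, by ring⟩
  by_cases heven : Even (e ^ 2 + d)
  · exact ⟨e, hcoprime.mul_dvd heven.two_dvd h⟩
  · refine ⟨e + p, hcoprime.mul_dvd (Even.two_dvd ?_) ?_⟩
    · simp only [Int.even_add, Int.even_pow, Int.not_even_iff_odd.mpr hp] at heven ⊢
      tauto
    · have hshift : (e + p) ^ 2 + d = e ^ 2 + d + p * (2 * e + p) := by ring
      exact hshift ▸ h.add (dvd_mul_right p _)

theorem isSumThreeSq_of_mul_prime_add_one_eq_mul (hp : p.Prime) (hp_odd : Odd p) (hd : Odd d)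
    (hε : ε = 1 ∨ ε = 2) (h : ε * p + 1 = d * n) (hpd : p % 4 = 1 ∨ d % 4 = 3)
    (hJ : J(-ε | d) = 1) : IsSumThreeSq n := by
  have hres : J(-d | p) = 1 :=
    (jacobiSym_neg_eq_jacobiSym_swap hd hp_odd hpd).trans
      (jacobiSym_eq_one_of_mul_add_one_eq_mul h hJ)
  obtain ⟨e₀, he₀⟩ := exists_dvd_sq_add_of_jacobiSym_eq_one hp hres
  obtain ⟨e, he⟩ := exists_two_mul_dvd_sq_add (by exact_mod_cast hp_odd) he₀
  have hdn : (d * n - 1 : ℤ) = ε * p := by zify at h; linear_combination -h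
  have hε_dvd : (ε : ℤ) ∣ 2 := by rcases hε with rfl | rfl <;> simp
  refine isSumThreeSq_of_dvd_sq_add (d := d) (e := e) (by exact_mod_cast hd.pos) ?_ ?_
  · have := hp.pos
    rw [hdn]
    rcases hε with rfl | rfl <;> positivity
  · exact hdn ▸ (mul_dvd_mul_right hε_dvd _).trans he

theorem exists_prime_mul_add_one_eq_mul (hn : n ≠ 0) (hq : Odd q) (h : ε * q + 1 = c * n) :
    ∃ p d : ℕ, p.Prime ∧ p % 4 = q % 4 ∧ d ≡ c [MOD 4 * ε] ∧ ε * p + 1 = d * n := by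
  have hqn : q.Coprime n := by
    refine Nat.isCoprime_iff_coprime.mp ⟨-ε, c, ?_⟩
    zify at h
    linear_combination -h
  have hcoprime : q.Coprime (4 * n) :=
    Nat.Coprime.mul_right ((Nat.coprime_two_right.mpr hq).pow_right 2) hqn
  obtain ⟨p, hpq, hp, hmod⟩ :=
    Nat.forall_exists_prime_gt_and_modEq q (q := 4 * n) (by positivity) hcoprime
  obtain ⟨v, hv⟩ := (Nat.modEq_iff_dvd' hpq.le).mp hmod.symm
  obtain rfl : p = q + 4 * n * v := by omega
  refine ⟨_, c + 4 * ε * v, hp, ?_, ?_, ?_⟩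
  · rw [mul_assoc, Nat.add_mul_mod_self_left]
  · exact Nat.add_mul_mod_self_left ..
  · linear_combination h

theorem isSumThreeSq_of_mod_four_eq_two (hn : n % 4 = 2) : IsSumThreeSq n := by
  obtain ⟨p, d, hp, hpq, hdc, h⟩ :=
    exists_prime_mul_add_one_eq_mul (n := n) (ε := 1) (q := n - 1) (c := 1) (by omega)
      (Nat.odd_iff.mpr (by omega)) (by omega)
  have hd1 : d % 4 = 1 := hdc
  have hd : Odd d := Nat.odd_iff.mpr (by omega)
  refine isSumThreeSq_of_mul_prime_add_one_eq_mul hp (Nat.odd_iff.mpr (by omega)) hd (.inl rfl) h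
    (.inl (by omega)) ?_
  rw [Nat.cast_one, jacobiSym.at_neg_one hd, χ₄_nat_one_mod_four hd1]

theorem isSumThreeSq_of_odd (hn : Odd n) (hn7 : n % 8 ≠ 7) : IsSumThreeSq n := by
  -- `c` will be the residue of `d` modulo `8`, and `J(-2 | d) = 1` exactly for residues `1, 3`.
  obtain ⟨c, hc, hcn⟩ : ∃ c, (c = 1 ∨ c = 3) ∧ c * n % 4 = 3 ∧ (c * n % 8 = 3 ∨ c = 3) := by
    rw [Nat.odd_iff] at hn
    by_cases hn3 : n % 8 = 3
    · exact ⟨1, by omega⟩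
    · exact ⟨3, by omega⟩
  obtain ⟨p, d, hp, hpq, hdc, h⟩ :=
    exists_prime_mul_add_one_eq_mul (n := n) (ε := 2) (q := (c * n - 1) / 2) (c := c)
      hn.pos.ne' (Nat.odd_iff.mpr (by omega)) (by omega)
  have hd8 : d % 8 = c := by
    rw [show d % 8 = c % 8 from hdc]
    omega
  have hd : Odd d := Nat.odd_iff.mpr (by omega)
  refine isSumThreeSq_of_mul_prime_add_one_eq_mul hp (Nat.odd_iff.mpr (by omega)) hd (.inr rfl) h
    (by omega) ?_
  rw [Nat.cast_ofNat, jacobiSym.at_neg_two hd, χ₈'_nat_eq_if_mod_eight, if_neg (by omega),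
    if_pos (by omega)]

end Reciprocity

theorem isSumThreeSq_of_emod {n : ℤ} (hn : 0 ≤ n) (hn4 : n % 4 ≠ 0) (hn8 : n % 8 ≠ 7) :
    IsSumThreeSq n := by
  lift n to ℕ using hn
  rcases Nat.even_or_odd n with heven | hodd
  · exact isSumThreeSq_of_mod_four_eq_two (by rw [Nat.even_iff] at heven; omega)
  · exact isSumThreeSq_of_odd hodd (by omega)

/-! ### Sums of four polygonal numbers -/

theorem sq_emod_four_eq_emod_two (x : ℤ) : x ^ 2 % 4 = x % 2 := by
  rcases Int.emod_two_eq_zero_or_one x with hx | hx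
  · rw [hx, Int.emod_eq_zero_of_dvd]
    exact pow_dvd_pow_of_dvd (Int.dvd_of_emod_eq_zero hx) 2
  · rw [hx, Int.sq_mod_four_eq_one_of_odd (Int.odd_iff.mpr hx)]

theorem emod_two_eq_of_sum_sq_eq_four_mul {a b u v w : ℤ}
    (h : b ^ 2 + u ^ 2 + v ^ 2 + w ^ 2 = 4 * a) :
    u % 2 = b % 2 ∧ v % 2 = b % 2 ∧ w % 2 = b % 2 := by
  have hb := sq_emod_four_eq_emod_two b
  have hu := sq_emod_four_eq_emod_two u
  have hv := sq_emod_four_eq_emod_two v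
  have hw := sq_emod_four_eq_emod_two w
  omega

theorem four_dvd_add_of_even {a b u v w : ℤ} (h : b ^ 2 + u ^ 2 + v ^ 2 + w ^ 2 = 4 * a)
    (ha : Even a) (hb : Even b) : 4 ∣ b + u + v + w := by
  obtain ⟨hu, hv, hw⟩ := emod_two_eq_of_sum_sq_eq_four_mul h
  rw [Int.even_iff.mp hb] at hu hv hw
  obtain ⟨b, rfl⟩ := hb.two_dvd
  obtain ⟨u, rfl⟩ := Int.dvd_of_emod_eq_zero hu
  obtain ⟨v, rfl⟩ := Int.dvd_of_emod_eq_zero hv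
  obtain ⟨w, rfl⟩ := Int.dvd_of_emod_eq_zero hw
  have hsum : Even (b ^ 2 + u ^ 2 + v ^ 2 + w ^ 2) := by
    convert ha using 1
    linarith
  simp only [Int.even_add, Int.even_pow' two_ne_zero] at hsum
  have hhalf : Even (b + u + v + w) := by simpa only [Int.even_add] using hsum
  obtain ⟨k, hk⟩ := hhalf.two_dvd
  exact ⟨k, by linear_combination 2 * hk⟩

theorem exists_sum_eq_and_sum_sq_eq {a b : ℤ} (hab : a ≡ b [ZMOD 2])
    (h : IsSumThreeSq (4 * a - b ^ 2)) :
    ∃ x y z w : ℤ, x + y + z + w = b ∧ x ^ 2 + y ^ 2 + z ^ 2 + w ^ 2 = a := by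
  obtain ⟨u, v, w₀, hsq₀⟩ := h
  have hsq₀ : b ^ 2 + u ^ 2 + v ^ 2 + w₀ ^ 2 = 4 * a := by linarith
  obtain ⟨hu, hv, hw₀⟩ := emod_two_eq_of_sum_sq_eq_four_mul hsq₀
  obtain ⟨w, hsq, hsum⟩ :
      ∃ w, b ^ 2 + u ^ 2 + v ^ 2 + w ^ 2 = 4 * a ∧ 4 ∣ b + u + v + w := by
    rcases Int.even_or_odd b with hb | hb
    · have ha : Even a := by rwa [Int.even_iff, hab, ← Int.even_iff]
      exact ⟨w₀, hsq₀, four_dvd_add_of_even hsq₀ ha hb⟩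
    · rw [Int.odd_iff] at hb
      by_cases hsum₀ : 4 ∣ b + u + v + w₀
      · exact ⟨w₀, hsq₀, hsum₀⟩
      · exact ⟨-w₀, by rwa [neg_sq], by omega⟩
  obtain ⟨-, -, hw⟩ := emod_two_eq_of_sum_sq_eq_four_mul hsq
  obtain ⟨x, hx⟩ : (4 : ℤ) ∣ b + u + v + w := by omega
  obtain ⟨y, hy⟩ : (4 : ℤ) ∣ b + u - v - w := by omega
  obtain ⟨z, hz⟩ : (4 : ℤ) ∣ b - u + v - w := by omega
  obtain ⟨t, ht⟩ : (4 : ℤ) ∣ b - u - v + w := by omega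
  refine ⟨x, y, z, t, by omega, ?_⟩
  have hfour : (4 * x) ^ 2 + (4 * y) ^ 2 + (4 * z) ^ 2 + (4 * t) ^ 2 = 16 * a := by
    rw [← hx, ← hy, ← hz, ← ht]
    linear_combination 4 * hsq
  linarith

theorem two_mul_polygonal (m x : ℤ) :
    2 * polygonal m x = (m - 2) * (x ^ 2 - x) + 2 * x := by
  obtain ⟨k, hk⟩ := Int.even_mul_pred_self x
  have heven : (m - 2) * x ^ 2 - (m - 4) * x = 2 * ((m - 2) * k + x) := by
    linear_combination (m - 2) * hk
  rw [polygonal, heven, Int.mul_ediv_cancel_left _ two_ne_zero]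
  linear_combination -(m - 2) * hk

theorem polygonal_zero (m : ℤ) : polygonal m 0 = 0 := by
  linarith [two_mul_polygonal m 0]

theorem polygonal_one (m : ℤ) : polygonal m 1 = 1 := by
  linarith [two_mul_polygonal m 1]

/-- `n` is a sum of four generalized `m`-gonal numbers. -/
def IsSumFourPolygonal (m n : ℤ) : Prop :=
  ∃ x y z w : ℤ, polygonal m x + polygonal m y + polygonal m z + polygonal m w = n

theorem isSumFourPolygonal_of_isSumThreeSq (m : ℤ) {j b : ℤ}
    (h : IsSumThreeSq (8 * j + 4 - (b - 2) ^ 2)) : IsSumFourPolygonal m ((m - 2) * j + b) := by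
  obtain ⟨x, y, z, w, hsum, hsq⟩ :=
    exists_sum_eq_and_sum_sq_eq (a := 2 * j + b) (b := b) (Int.modEq_iff_dvd.mpr ⟨-j, by ring⟩)
      (by convert h using 1; ring)
  refine ⟨x, y, z, w, mul_left_cancel₀ two_ne_zero ?_⟩
  linear_combination two_mul_polygonal m x + two_mul_polygonal m y + two_mul_polygonal m z +
    two_mul_polygonal m w + (m - 2) * hsq - (m - 4) * hsum

theorem isSumFourPolygonal_of_odd (m : ℤ) {j b : ℤ} (hb : Odd b) (h : (b - 2) ^ 2 ≤ 8 * j + 4) :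
    IsSumFourPolygonal m ((m - 2) * j + b) := by
  have hsq : 8 ∣ (b - 2) ^ 2 - 1 := Int.eight_dvd_sq_sub_one_of_odd (hb.sub_even even_two)
  exact isSumFourPolygonal_of_isSumThreeSq m (isSumThreeSq_of_emod (by omega) (by omega) (by omega))

theorem isSumFourPolygonal_two_mul (m : ℤ) {j c : ℤ} (hjc : Odd (j + c))
    (h : (c - 1) ^ 2 ≤ 2 * j + 1) : IsSumFourPolygonal m ((m - 2) * j + 2 * c) := by
  have hsq := sq_emod_four_eq_emod_two (c - 1)
  rw [Int.odd_iff] at hjc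
  have hthree : IsSumThreeSq (2 * j + 1 - (c - 1) ^ 2) :=
    isSumThreeSq_of_emod (by omega) (by omega) (by omega)
  refine isSumFourPolygonal_of_isSumThreeSq m ?_
  convert hthree.sq_mul 2 using 1
  ring

/-! ### Universality -/

theorem exists_polygonal_11112_of_isSumFourPolygonal {m N : ℤ}
    (h : IsSumFourPolygonal m N ∨ IsSumFourPolygonal m (N - 2)) :
    ∃ x₁ x₂ x₃ x₄ x₅ : ℤ,
      polygonal m x₁ + polygonal m x₂ + polygonal m x₃ + polygonal m x₄ +
        2 * polygonal m x₅ = N := by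
  rcases h with ⟨x, y, z, w, h⟩ | ⟨x, y, z, w, h⟩
  · exact ⟨x, y, z, w, 0, by rw [h, polygonal_zero]; ring⟩
  · exact ⟨x, y, z, w, 1, by rw [h, polygonal_one]; ring⟩

theorem isSumFourPolygonal_or_sub_two (m : ℤ) {j r : ℤ} (hj : 1 ≤ j) (hr : 0 ≤ r) (hr' : r ≤ 7) :
    IsSumFourPolygonal m ((m - 2) * j + r) ∨ IsSumFourPolygonal m ((m - 2) * j + r - 2) := by
  simp only [add_sub_assoc]
  rcases Int.even_or_odd' r with ⟨s, rfl | rfl⟩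
  · rcases Int.even_or_odd (j + s) with heven | hodd
    · right
      rw [show 2 * s - 2 = 2 * (s - 1) by ring]
      refine isSumFourPolygonal_two_mul m (by grind) ?_
      obtain rfl | rfl | rfl | rfl : s = 0 ∨ s = 1 ∨ s = 2 ∨ s = 3 := by omega
      all_goals grind
    · left
      refine isSumFourPolygonal_two_mul m hodd ?_
      obtain rfl | rfl | rfl | rfl : s = 0 ∨ s = 1 ∨ s = 2 ∨ s = 3 := by omega
      all_goals grind
  · right
    have hs : 0 ≤ s * (3 - s) := mul_nonneg (by omega) (by omega)
    exact isSumFourPolygonal_of_odd m (by grind) (by linarith)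

theorem exists_polygonal_11112_of_le_six (m : ℤ) {N : ℤ} (hN : 0 ≤ N) (hN' : N ≤ 6) :
    ∃ x₁ x₂ x₃ x₄ x₅ : ℤ,
      polygonal m x₁ + polygonal m x₂ + polygonal m x₃ + polygonal m x₄ +
        2 * polygonal m x₅ = N := by
  have hone := polygonal_one m
  have hzero := polygonal_zero m
  interval_cases N
  · exact ⟨0, 0, 0, 0, 0, by linarith⟩
  · exact ⟨1, 0, 0, 0, 0, by linarith⟩
  · exact ⟨1, 1, 0, 0, 0, by linarith⟩
  · exact ⟨1, 1, 1, 0, 0, by linarith⟩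
  · exact ⟨1, 1, 1, 1, 0, by linarith⟩
  · exact ⟨1, 1, 1, 0, 1, by linarith⟩
  · exact ⟨1, 1, 1, 1, 1, by linarith⟩

theorem universal_11112_small_m (m : ℤ) (hm : 3 ≤ m) (hm' : m - 4 ≤ 6) :
    ∀ N : ℤ, 0 < N →
      ∃ x₁ x₂ x₃ x₄ x₅ : ℤ,
        polygonal m x₁ + polygonal m x₂ + polygonal m x₃ + polygonal m x₄ +
          2 * polygonal m x₅ = N := by
  intro N hN
  obtain ⟨j, r, hdiv, hr, hrm⟩ : ∃ j r, (m - 2) * j + r = N ∧ 0 ≤ r ∧ r < m - 2 :=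
    ⟨N / (m - 2), N % (m - 2), Int.mul_ediv_add_emod .., Int.emod_nonneg _ (by omega),
      Int.emod_lt_of_pos _ (by omega)⟩
  rcases le_or_gt 1 j with hj | hj
  · rw [← hdiv]
    exact exists_polygonal_11112_of_isSumFourPolygonal
      (isSumFourPolygonal_or_sub_two m hj hr (by omega))
  have hNm : N < m - 2 := by nlinarith
  rcases le_or_gt N 6 with hN6 | hN6
  · exact exists_polygonal_11112_of_le_six m hN.le hN6
  obtain ⟨rfl, rfl⟩ : m = 10 ∧ N = 7 := by omega
  exact ⟨-1, 0, 0, 0, 0, by decide⟩
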